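/- For all N ≥ 2 and all integers k ≥ 2, Q_k ≤ Q_{k+1}, where Q_k = (j²_{N/2−1} / (2 N ω_N G_N²)) · (ℓ_k² − N²/4) / ( ℓ_k + N/2 − j_{N/2−1} · J_{ℓ_k+1}(j_{N/2−1}) / J_{ℓ_k}(j_{N/2−1}) ) and ℓ_k = k + N/2 − 1. Consequently the infimum over k ≥ 2 of Q_k equals Q_2, which is the constant C_N. -/

import Mathlib

open MeasureTheory Metric Set Filter Topology
open scoped RealInnerProductSpace

noncomputable section

abbrev euc (N : ℕ) := EuclideanSpace ℝ (Fin N)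

/-- Bessel function of the first kind of order `ν`, via its power series. -/
def besselJ (ν : ℝ) (x : ℝ) : ℝ :=
  ∑' m : ℕ, ((-1 : ℝ) ^ m / (m.factorial * Real.Gamma (m + ν + 1))) *
    (x / 2) ^ (2 * (m : ℝ) + ν)

/-- First positive zero of the Bessel function `J_ν`. -/
def besselJzero (ν : ℝ) : ℝ := sInf {x : ℝ | 0 < x ∧ besselJ ν x = 0}

/-- Volume of the unit ball of `ℝ^N`. -/
def ballVol (N : ℕ) : ℝ := (volume (ball (0 : euc N) 1)).toReal

/-- Perimeter: `(N-1)`-dimensional Hausdorff measure of the topological boundary. -/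
def perim (N : ℕ) (Ω : Set (euc N)) : ℝ := (μH[(N : ℝ) - 1] (frontier Ω)).toReal

/-- First Dirichlet Laplacian eigenvalue: infimum of Rayleigh quotients over nonzero
smooth functions compactly supported in `Ω`. -/
def firstEigenvalue (N : ℕ) (Ω : Set (euc N)) : ℝ :=
  sInf { R : ℝ | ∃ u : euc N → ℝ, ContDiff ℝ (⊤ : ℕ∞) u ∧ HasCompactSupport u ∧
    tsupport u ⊆ Ω ∧ u ≠ 0 ∧
    R = (∫ x, ‖gradient u x‖ ^ 2) / (∫ x, u x ^ 2) }

/-- Radius of the ball `Ω♯` with the same Lebesgue measure as `Ω`. -/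
def sharpRadius (N : ℕ) (Ω : Set (euc N)) : ℝ :=
  ((volume Ω).toReal / ballVol N) ^ ((1 : ℝ) / N)

/-- Isoperimetric deficit `δP(Ω) = Per(Ω)/Per(Ω♯) - 1`. -/
def perDeficit (N : ℕ) (Ω : Set (euc N)) : ℝ :=
  perim N Ω / perim N (ball (0 : euc N) (sharpRadius N Ω)) - 1

/-- Faber-Krahn deficit `δλ(Ω) = λ(Ω)/λ(Ω♯) - 1`. -/
def fkDeficit (N : ℕ) (Ω : Set (euc N)) : ℝ :=
  firstEigenvalue N Ω / firstEigenvalue N (ball (0 : euc N) (sharpRadius N Ω)) - 1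

/-- A one-parameter family `Ω t` of subsets of `ℝ^N` smoothly converges to `Ω₀` as `t → 0`. -/
structure SmoothlyConverges (N : ℕ) (Ω : ℝ → Set (euc N)) (Ω₀ : Set (euc N)) where
  δ : ℝ
  δ_pos : 0 < δ
  Φ : ℝ → euc N → euc N
  Φinv : ℝ → euc N → euc N
  left_inv : ∀ t ∈ Ico (0 : ℝ) δ, Function.LeftInverse (Φinv t) (Φ t)
  right_inv : ∀ t ∈ Ico (0 : ℝ) δ, Function.RightInverse (Φinv t) (Φ t)
  smooth_x : ∀ t ∈ Ico (0 : ℝ) δ, ContDiff ℝ (⊤ : ℕ∞) (Φ t)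
  smooth_x_inv : ∀ t ∈ Ico (0 : ℝ) δ, ContDiff ℝ (⊤ : ℕ∞) (Φinv t)
  smooth_t : ∀ x, ContDiffOn ℝ (⊤ : ℕ∞) (fun t => Φ t x) (Ico (0 : ℝ) δ)
  smooth_t_inv : ∀ x, ContDiffOn ℝ (⊤ : ℕ∞) (fun t => Φinv t x) (Ico (0 : ℝ) δ)
  init : Ω 0 = Ω₀
  image : ∀ t ∈ Ico (0 : ℝ) δ, Ω t = Φ t '' Ω₀

/-- The Laplacian of `f : ℝ^N → ℝ`, as the trace of the second derivative. -/
def lap (N : ℕ) (f : euc N → ℝ) (x : euc N) : ℝ :=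
  ∑ i : Fin N,
    iteratedFDeriv ℝ 2 f x ![EuclideanSpace.single i 1, EuclideanSpace.single i 1]

/-- The divergence of a vector field on `ℝ^N`. -/
def diver (N : ℕ) (f : euc N → euc N) (x : euc N) : ℝ :=
  ∑ i : Fin N, ⟪fderiv ℝ f x (EuclideanSpace.single i 1), (EuclideanSpace.single i 1 : euc N)⟫

/-- The constant `G_N`: the modulus of the gradient on the boundary of the normalized first
eigenfunction of the unit ball. -/
def GN (N : ℕ) : ℝ :=
  (besselJzero ((N : ℝ) / 2 - 1)) ^ 2 *
      deriv (besselJ ((N : ℝ) / 2 - 1)) (besselJzero ((N : ℝ) / 2 - 1)) /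
    Real.sqrt (N * ballVol N *
      ∫ r in (0 : ℝ)..(besselJzero ((N : ℝ) / 2 - 1)), r * besselJ ((N : ℝ) / 2 - 1) r ^ 2)

/-- The optimal constant `C_N` of the paper. -/
def CN (N : ℕ) : ℝ :=
  (N * (N + 1) *
      ∫ r in (0 : ℝ)..(besselJzero ((N : ℝ) / 2 - 1)), r * besselJ ((N : ℝ) / 2 - 1) r ^ 2) /
    (2 * (besselJzero ((N : ℝ) / 2 - 1) *
        deriv (besselJ ((N : ℝ) / 2 - 1)) (besselJzero ((N : ℝ) / 2 - 1))) ^ 2 *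
      ((besselJzero ((N : ℝ) / 2 - 1)) ^ 2 - N))

end

noncomputable section

/-- The sequence `Q_k` of Lemma 2.3:
`Q_k = (j²_{N/2-1}/(2Nω_N G_N²)) (ℓ_k² - N²/4)/(ℓ_k + N/2 - j_{N/2-1} J_{ℓ_k+1}(j)/J_{ℓ_k}(j))`
with `ℓ_k = k + N/2 - 1`. -/
def Qseq (N : ℕ) (k : ℕ) : ℝ :=
  besselJzero ((N : ℝ) / 2 - 1) ^ 2 / (2 * N * ballVol N * GN N ^ 2) *
    ((((k : ℝ) + N / 2 - 1) ^ 2 - (N : ℝ) ^ 2 / 4) /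
      (((k : ℝ) + N / 2 - 1) + N / 2 -
        besselJzero ((N : ℝ) / 2 - 1) *
            besselJ (((k : ℝ) + N / 2 - 1) + 1) (besselJzero ((N : ℝ) / 2 - 1)) /
          besselJ ((k : ℝ) + N / 2 - 1) (besselJzero ((N : ℝ) / 2 - 1))))

end

noncomputable section

namespace BesselAux

/-- Coefficients of the entire part of the Bessel function. -/
def cf (ν : ℝ) (m : ℕ) : ℝ := (-1 : ℝ) ^ m / (m.factorial * Real.Gamma (m + ν + 1))

/-- Entire part of the Bessel function. -/
def g (ν : ℝ) (y : ℝ) : ℝ := ∑' m : ℕ, cf ν m * y ^ m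

lemma gamma_rec {ν : ℝ} (hν : 0 ≤ ν) (m : ℕ) :
    Real.Gamma (m + (ν + 1) + 1) = (m + ν + 1) * Real.Gamma (m + ν + 1) := by
  have h : (m : ℝ) + ν + 1 ≠ 0 := by positivity
  rw [← Real.Gamma_add_one h]; congr 1; ring

lemma gamma_lb {ν : ℝ} (hν : 0 ≤ ν) (m : ℕ) :
    Real.Gamma (ν + 1) ≤ Real.Gamma (m + ν + 1) := by
  induction m with
  | zero => simp
  | succ m ih =>
    have h := gamma_rec hν m
    have h2 : (((m + 1 : ℕ) : ℝ) + ν + 1) = (m + (ν + 1) + 1) := by push_cast; ring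
    have h0 : 0 < Real.Gamma (ν + 1) := Real.Gamma_pos_of_pos (by linarith)
    rw [h2, h]
    have hm : (0 : ℝ) ≤ m := Nat.cast_nonneg m
    nlinarith

lemma cf_bound {ν : ℝ} (hν : 0 ≤ ν) (m : ℕ) :
    |cf ν m| ≤ (Real.Gamma (ν + 1))⁻¹ * (1 / m.factorial) := by
  have h0 : 0 < Real.Gamma (ν + 1) := Real.Gamma_pos_of_pos (by linarith)
  have h1 := gamma_lb hν m
  have hf : (0 : ℝ) < m.factorial := by exact_mod_cast m.factorial_pos
  unfold cf
  rw [abs_div, abs_pow, abs_neg, abs_one, one_pow, abs_of_pos (mul_pos hf (h0.trans_le h1)),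
    ← one_div, one_div_mul_one_div]
  apply one_div_le_one_div_of_le (by positivity)
  rw [mul_comm]
  gcongr

lemma cf_succ {ν : ℝ} (hν : 0 ≤ ν) (m : ℕ) :
    cf ν (m + 1) * (m + 1) = - cf (ν + 1) m := by
  have hg : Real.Gamma (m + (ν + 1) + 1) ≠ 0 := (Real.Gamma_pos_of_pos (by positivity)).ne'
  have hf : (m.factorial : ℝ) ≠ 0 := by exact_mod_cast m.factorial_ne_zero
  have hm : (m : ℝ) + 1 ≠ 0 := by positivity
  unfold cf
  have h2 : (((m + 1 : ℕ) : ℝ) + ν + 1) = (m + (ν + 1) + 1) := by push_cast; ring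
  rw [h2, Nat.factorial_succ]
  push_cast
  field_simp
  ring

lemma cf_rec {ν : ℝ} (hν : 0 ≤ ν) (m : ℕ) :
    cf ν m = (ν + 1 + m) * cf (ν + 1) m := by
  have hg : Real.Gamma (m + ν + 1) ≠ 0 := (Real.Gamma_pos_of_pos (by positivity)).ne'
  have hf : (m.factorial : ℝ) ≠ 0 := by exact_mod_cast m.factorial_ne_zero
  have hm : (m : ℝ) + ν + 1 ≠ 0 := by positivity
  unfold cf
  rw [gamma_rec hν]
  field_simp
  ring

lemma summ_exp (R : ℝ) (ν : ℝ) :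
    Summable fun m : ℕ => (Real.Gamma (ν + 1))⁻¹ * (R ^ m / m.factorial) :=
  (Real.summable_pow_div_factorial R).mul_left _

lemma summ {ν : ℝ} (hν : 0 ≤ ν) (y : ℝ) : Summable fun m : ℕ => cf ν m * y ^ m := by
  refine Summable.of_norm_bounded (summ_exp |y| ν) fun m => ?_
  rw [Real.norm_eq_abs, abs_mul, abs_pow]
  calc _ ≤ (Real.Gamma (ν + 1))⁻¹ * (1 / m.factorial) * |y| ^ m := by
        gcongr; exact cf_bound hν m
    _ = _ := by ring

lemma hasDerivAt_g {ν : ℝ} (hν : 0 ≤ ν) (y : ℝ) : HasDerivAt (g ν) (- g (ν + 1) y) y := by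
  have hν1 : 0 ≤ ν + 1 := by linarith
  set R := |y| + 1
  have hR : 0 ≤ R := by positivity
  have hu : Summable fun m : ℕ => (m : ℝ) * |cf ν m| * R ^ (m - 1) := by
    rw [← summable_nat_add_iff 1]
    refine Summable.of_nonneg_of_le (fun m => by positivity) (fun m => ?_) (summ_exp R (ν + 1))
    have h := congrArg abs (cf_succ hν m)
    rw [abs_mul, abs_neg, abs_of_pos (by positivity : (0 : ℝ) < m + 1)] at h
    push_cast
    rw [mul_comm ((m : ℝ) + 1), h]
    calc _ ≤ (Real.Gamma (ν + 1 + 1))⁻¹ * (1 / m.factorial) * R ^ m := by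
          gcongr; exact cf_bound hν1 m
      _ = _ := by ring
  have key := hasDerivAt_tsum_of_isPreconnected (𝕜 := ℝ) (F := ℝ) (t := Metric.ball 0 R)
    (g := fun m y => cf ν m * y ^ m) (g' := fun m y => cf ν m * (m * y ^ (m - 1)))
    (y₀ := 0) (y := y) hu Metric.isOpen_ball (convex_ball 0 R).isPreconnected
    (fun m z _ => (hasDerivAt_pow m z).const_mul _)
    (fun m z hz => by
      have hz' : |z| ≤ R := by
        rw [Metric.mem_ball, dist_zero_right, Real.norm_eq_abs] at hz; exact hz.le
      rw [Real.norm_eq_abs, abs_mul, abs_mul, abs_pow, Nat.abs_cast, ← mul_assoc,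
        mul_comm (|cf ν m|)]
      gcongr)
    (Metric.mem_ball_self (by positivity)) (summ hν 0)
    (by rw [Metric.mem_ball, dist_zero_right, Real.norm_eq_abs]; simp [R])
  refine HasDerivAt.congr_deriv (f := g ν) key ?_
  symm
  have hs : Summable fun m : ℕ => cf ν m * (m * y ^ (m - 1)) := by
    rw [← summable_nat_add_iff 1]
    refine ((summ hν1 y).neg).congr fun m => ?_
    simp only [Nat.add_sub_cancel]
    push_cast
    rw [← mul_assoc, cf_succ hν m]; ring
  rw [hs.tsum_eq_zero_add]
  unfold g
  rw [← tsum_neg]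
  simp only [Nat.cast_zero, zero_mul, mul_zero, zero_add]
  refine tsum_congr fun m => ?_
  simp only [Nat.add_sub_cancel]
  push_cast
  rw [← mul_assoc, cf_succ hν m]; ring

lemma g_rec {ν : ℝ} (hν : 0 ≤ ν) (y : ℝ) :
    g ν y = (ν + 1) * g (ν + 1) y - y * g (ν + 2) y := by
  have hν1 : 0 ≤ ν + 1 := by linarith
  have hν2 : 0 ≤ ν + 2 := by linarith
  have h1 : HasSum (fun m : ℕ => (m : ℝ) * cf (ν + 1) m * y ^ m) (- (y * g (ν + 2) y)) := by
    rw [← hasSum_nat_add_iff' 1]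
    have := ((summ hν2 y).hasSum.mul_left y).neg
    simp only [Finset.range_one, Finset.sum_singleton, Nat.cast_zero, zero_mul, sub_zero]
    refine this.congr_fun fun m => ?_
    have h := cf_succ hν1 m
    rw [show ν + 1 + 1 = ν + 2 by ring] at h
    push_cast
    rw [mul_comm ((m : ℝ) + 1), h]; ring
  have h2 := ((summ hν1 y).hasSum.mul_left (ν + 1)).add h1
  have h3 : g ν y = _ := ((h2.congr_fun fun m => by rw [cf_rec hν m]; ring) :
    HasSum (fun m : ℕ => cf ν m * y ^ m) _).tsum_eq
  rw [h3]; unfold g; ring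

lemma g_zero {ν : ℝ} (hν : 0 ≤ ν) : 0 < g ν 0 := by
  unfold g
  rw [tsum_eq_single 0 (fun m hm => by simp [hm])]
  have : 0 < Real.Gamma (ν + 1) := Real.Gamma_pos_of_pos (by linarith)
  simp [cf, this]

lemma J_eq {ν x : ℝ} (hν : 0 ≤ ν) (hx : 0 ≤ x) :
    besselJ ν x = (x / 2) ^ ν * g ν (x ^ 2 / 4) := by
  unfold besselJ g
  rw [← tsum_mul_left]
  refine tsum_congr fun m => ?_
  have h : (x / 2) ^ (2 * (m : ℝ) + ν) = (x ^ 2 / 4) ^ m * (x / 2) ^ ν := by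
    rw [Real.rpow_add_of_nonneg (by positivity) (by positivity) hν]
    congr 1
    rw [show (2 * (m : ℝ)) = ((2 * m : ℕ) : ℝ) by push_cast; ring, Real.rpow_natCast, pow_mul]
    congr 1; ring
  rw [h, cf]; ring

lemma cont_h {ν : ℝ} (hν : 0 ≤ ν) : Continuous fun x : ℝ => g ν (x ^ 2 / 4) := by
  have : Continuous (g ν) := continuous_iff_continuousAt.2 fun y => (hasDerivAt_g hν y).continuousAt
  fun_prop

lemma J_cont {ν : ℝ} (hν : 0 ≤ ν) : ContinuousOn (besselJ ν) (Ici 0) := by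
  have : Continuous fun x : ℝ => (x / 2) ^ ν * g ν (x ^ 2 / 4) := by
    refine Continuous.mul ?_ (cont_h hν)
    exact (continuous_id.div_const 2).rpow_const fun x => Or.inr hν
  exact this.continuousOn.congr fun x hx => J_eq hν hx

lemma J_zero {ν : ℝ} (hν : 0 < ν) : besselJ ν 0 = 0 := by
  rw [J_eq hν.le le_rfl]; simp [Real.zero_rpow hν.ne']

lemma J_deriv {ν x : ℝ} (hν : 0 ≤ ν) (hx : 0 < x) :
    HasDerivAt (besselJ ν) (ν / x * besselJ ν x - besselJ (ν + 1) x) x := by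
  have h1 : HasDerivAt (fun x : ℝ => (x / 2) ^ ν) (1 / 2 * ν * (x / 2) ^ (ν - 1)) x :=
    ((hasDerivAt_id x).div_const 2).rpow_const (Or.inl (by simp; positivity))
  have h2 : HasDerivAt (fun x : ℝ => g ν (x ^ 2 / 4)) (- g (ν + 1) (x ^ 2 / 4) * (x / 2)) x := by
    have := ((hasDerivAt_pow 2 x).div_const 4)
    refine (hasDerivAt_g hν (x ^ 2 / 4)).comp x (this.congr_deriv ?_)
    norm_num; ring
  have h3 := (h1.mul h2).congr_of_eventuallyEq (f₁ := besselJ ν)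
    (by filter_upwards [lt_mem_nhds hx] with z hz; exact J_eq hν hz.le)
  refine h3.congr_deriv ?_
  have hx2 : 0 < x / 2 := by positivity
  rw [J_eq hν hx.le, J_eq (by linarith) hx.le, Real.rpow_sub_one hx2.ne',
    Real.rpow_add_one hx2.ne']
  field_simp
  ring

lemma J_rec {ν x : ℝ} (hν : 0 ≤ ν) (hx : 0 < x) :
    besselJ (ν + 2) x = 2 * (ν + 1) / x * besselJ (ν + 1) x - besselJ ν x := by
  have hx2 : 0 < x / 2 := by positivity
  rw [J_eq hν hx.le, J_eq (by linarith) hx.le, J_eq (by linarith) hx.le,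
    show ν + 2 = ν + 1 + 1 by ring, Real.rpow_add_one hx2.ne', Real.rpow_add_one hx2.ne',
    g_rec hν, show ν + 2 = ν + 1 + 1 by ring]
  field_simp
  ring

/-- Facts on the first zero. -/
lemma zero_facts {ν : ℝ} (hν : 0 ≤ ν) (hne : besselJzero ν ≠ 0) :
    0 < besselJzero ν ∧ besselJ ν (besselJzero ν) = 0 ∧
      ∀ x, 0 < x → x < besselJzero ν → 0 < besselJ ν x := by
  set j := besselJzero ν with hj
  have hS : {x : ℝ | 0 < x ∧ besselJ ν x = 0}.Nonempty := by
    by_contra h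
    rw [Set.not_nonempty_iff_eq_empty] at h
    apply hne
    rw [hj, besselJzero, h, Real.sInf_empty]
  have hJg : ∀ x, 0 < x → (besselJ ν x = 0 ↔ g ν (x ^ 2 / 4) = 0) := fun x hx => by
    have : (x / 2) ^ ν ≠ 0 := (Real.rpow_pos_of_pos (by positivity) _).ne'
    rw [J_eq hν hx.le]; simp [this]
  have hg0 : 0 < g ν ((0 : ℝ) ^ 2 / 4) := by simpa using g_zero hν
  have hSe : {x : ℝ | 0 < x ∧ besselJ ν x = 0} = {x : ℝ | 0 ≤ x ∧ g ν (x ^ 2 / 4) = 0} := by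
    ext x
    constructor
    · rintro ⟨h1, h2⟩; exact ⟨h1.le, (hJg x h1).1 h2⟩
    · rintro ⟨h1, h2⟩
      have : 0 < x := by
        rcases h1.eq_or_lt with h | h
        · rw [← h] at h2; exact absurd h2 hg0.ne'
        · exact h
      exact ⟨this, (hJg x this).2 h2⟩
  have hcl : IsClosed {x : ℝ | 0 < x ∧ besselJ ν x = 0} := by
    rw [hSe]
    exact (isClosed_le continuous_const continuous_id).inter
      (isClosed_eq (cont_h hν) continuous_const)
  have hbdd : BddBelow {x : ℝ | 0 < x ∧ besselJ ν x = 0} := ⟨0, fun x hx => hx.1.le⟩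
  have hmem := hcl.csInf_mem hS hbdd
  refine ⟨hmem.1, hmem.2, fun x hx hxj => ?_⟩
  have hpos : 0 < g ν (x ^ 2 / 4) := by
    by_contra hneg
    obtain ⟨z, hz, hz0⟩ := intermediate_value_Icc' hx.le (cont_h hν).continuousOn
      (show (0 : ℝ) ∈ Icc _ _ from ⟨not_lt.1 hneg, hg0.le⟩)
    have hzS : z ∈ {x : ℝ | 0 < x ∧ besselJ ν x = 0} := by rw [hSe]; exact ⟨hz.1, hz0⟩
    have : j ≤ z := csInf_le hbdd hzS
    linarith [hz.2]
  rw [J_eq hν hx.le]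
  exact mul_pos (Real.rpow_pos_of_pos (by positivity) _) hpos

lemma J_deriv' {ν x : ℝ} (hν : 0 ≤ ν) (hx : 0 < x) :
    HasDerivAt (besselJ (ν + 1)) (besselJ ν x - (ν + 1) / x * besselJ (ν + 1) x) x := by
  refine (J_deriv (by linarith : 0 ≤ ν + 1) hx).congr_deriv ?_
  rw [show ν + 1 + 1 = ν + 2 by ring, J_rec hν hx]; field_simp; ring

lemma pos_step {ν j : ℝ} (hν : 0 ≤ ν) (hp : ∀ x, 0 < x → x < j → 0 < besselJ ν x) :
    ∀ x, 0 < x → x ≤ j → 0 < besselJ (ν + 1) x := by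
  intro x hx hxj
  have hν1 : 0 < ν + 1 := by linarith
  have hmono : StrictMonoOn (fun t : ℝ => t ^ (ν + 1) * besselJ (ν + 1) t) (Icc 0 x) := by
    apply strictMonoOn_of_deriv_pos (convex_Icc 0 x)
    · refine ContinuousOn.mul ?_ ((J_cont hν1.le).mono fun t ht => ht.1)
      exact (continuous_id.rpow_const fun t => Or.inr hν1.le).continuousOn
    · intro t ht
      rw [interior_Icc] at ht
      have h1 := (Real.hasDerivAt_rpow_const (p := ν + 1) (Or.inl ht.1.ne')).mul (J_deriv' hν ht.1)
      have h2 : deriv (fun t : ℝ => t ^ (ν + 1) * besselJ (ν + 1) t) t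
          = t ^ (ν + 1) * besselJ ν t := by
        refine (h1.congr_deriv ?_).deriv
        rw [Real.rpow_sub_one ht.1.ne']
        have := ht.1.ne'
        field_simp
        ring
      rw [h2]
      exact mul_pos (Real.rpow_pos_of_pos ht.1 _) (hp t ht.1 (ht.2.trans_le hxj))
  have h := hmono (left_mem_Icc.2 hx.le) (right_mem_Icc.2 hx.le) hx
  simp only [Real.zero_rpow hν1.ne', zero_mul] at h
  exact pos_of_mul_pos_right h (Real.rpow_pos_of_pos hx _).le

lemma pos_all {ν j : ℝ} (hν : 0 ≤ ν) (hp : ∀ x, 0 < x → x < j → 0 < besselJ ν x) (k : ℕ) :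
    ∀ x, 0 < x → x ≤ j → 0 < besselJ (ν + k + 1) x := by
  induction k with
  | zero => simpa using pos_step hν hp
  | succ k ih =>
    have := pos_step (ν := ν + k + 1) (by positivity) (fun x hx hxj => ih x hx hxj.le)
    push_cast
    rw [show ν + (k + 1) + 1 = ν + k + 1 + 1 by ring]
    exact this

/-- `r` times the Wronskian of `J_a`, `J_b`. -/
def W (a b x : ℝ) : ℝ := (b - a) * besselJ a x * besselJ b x - x * besselJ (b + 1) x * besselJ a x
  + x * besselJ b x * besselJ (a + 1) x

lemma W_zero {a b : ℝ} (ha : 0 < a) : W a b 0 = 0 := by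
  simp [W, J_zero ha]

lemma W_cont {a b : ℝ} (ha : 0 ≤ a) (hb : 0 ≤ b) : ContinuousOn (W a b) (Ici 0) := by
  have h1 := J_cont ha
  have h2 := J_cont hb
  have h3 := J_cont (by linarith : 0 ≤ a + 1)
  have h4 := J_cont (by linarith : 0 ≤ b + 1)
  unfold W
  fun_prop

lemma W_deriv {a b x : ℝ} (ha : 0 ≤ a) (hb : 0 ≤ b) (hx : 0 < x) :
    HasDerivAt (W a b) ((b ^ 2 - a ^ 2) * (besselJ a x * besselJ b x / x)) x := by
  have h1 := J_deriv ha hx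
  have h2 := J_deriv hb hx
  have h3 := J_deriv' ha hx
  have h4 := J_deriv' hb hx
  have h := (((h1.const_mul (b - a)).mul h2).sub (((hasDerivAt_id x).mul h4).mul h1)).add
    (((hasDerivAt_id x).mul h2).mul h3)
  refine HasDerivAt.congr_deriv (f := W a b) h ?_
  simp only [id, Pi.mul_apply]
  field_simp
  ring

lemma W_pos {a b j : ℝ} (ha : 0 < a) (hab : a < b)
    (hpa : ∀ x, 0 < x → x ≤ j → 0 < besselJ a x) (hpb : ∀ x, 0 < x → x ≤ j → 0 < besselJ b x)
    {x : ℝ} (hx : 0 < x) (hxj : x ≤ j) : 0 < W a b x := by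
  have hb := ha.trans hab
  have hmono : StrictMonoOn (W a b) (Icc 0 x) := by
    apply strictMonoOn_of_deriv_pos (convex_Icc 0 x)
      ((W_cont ha.le hb.le).mono fun t ht => ht.1)
    intro t ht
    rw [interior_Icc] at ht
    rw [(W_deriv ha.le hb.le ht.1).deriv]
    have h1 := hpa t ht.1 (ht.2.le.trans hxj)
    have h2 := hpb t ht.1 (ht.2.le.trans hxj)
    have := ht.1
    have h3 : 0 < b ^ 2 - a ^ 2 := by nlinarith
    positivity
  have h := hmono (left_mem_Icc.2 hx.le) (right_mem_Icc.2 hx.le) hx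
  rwa [W_zero ha] at h

/-- `J_c / J_b` is increasing. -/
lemma ratio_mono {b c j : ℝ} (hb : 0 < b) (hbc : b < c)
    (hpb : ∀ x, 0 < x → x ≤ j → 0 < besselJ b x) (hpc : ∀ x, 0 < x → x ≤ j → 0 < besselJ c x)
    {x : ℝ} (hx : 0 < x) (hxj : x ≤ j) :
    besselJ c x * besselJ b j ≤ besselJ c j * besselJ b x := by
  have hc := hb.trans hbc
  have hd : ∀ t ∈ Icc x j, HasDerivAt (fun t => besselJ c t / besselJ b t)
      (W b c t / (t * besselJ b t ^ 2)) t := by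
    intro t ht
    have ht0 := hx.trans_le ht.1
    have hbt := (hpb t ht0 ht.2).ne'
    refine ((J_deriv hc.le ht0).div (J_deriv hb.le ht0) hbt).congr_deriv ?_
    unfold W
    field_simp
    ring
  have hmono : MonotoneOn (fun t => besselJ c t / besselJ b t) (Icc x j) := by
    apply monotoneOn_of_deriv_nonneg (convex_Icc x j)
    · exact fun t ht => (hd t ht).continuousAt.continuousWithinAt
    · exact fun t ht => (hd t (interior_subset ht)).differentiableAt.differentiableWithinAt
    · intro t ht
      have ht' := interior_subset ht
      have ht0 := hx.trans_le ht'.1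
      rw [(hd t ht').deriv]
      have h1 := W_pos hb hbc hpb hpc ht0 ht'.2
      have h2 := hpb t ht0 ht'.2
      positivity
  have h := hmono (left_mem_Icc.2 hxj) (right_mem_Icc.2 hxj) hxj
  exact (div_le_div_iff₀ (hpb x hx hxj) (hpb j (hx.trans_le hxj) le_rfl)).1 h

lemma W_compare {a b c j : ℝ} (ha : 0 < a) (hab : a < b) (hbc : b < c) (hj : 0 < j)
    (hpa : ∀ x, 0 < x → x ≤ j → 0 < besselJ a x)
    (hpb : ∀ x, 0 < x → x ≤ j → 0 < besselJ b x) (hpc : ∀ x, 0 < x → x ≤ j → 0 < besselJ c x) :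
    besselJ b j * (W a c j / (c ^ 2 - a ^ 2)) ≤ besselJ c j * (W a b j / (b ^ 2 - a ^ 2)) := by
  have hb := ha.trans hab
  have hc := hb.trans hbc
  have h1 : b ^ 2 - a ^ 2 ≠ 0 := by nlinarith
  have h2 : c ^ 2 - a ^ 2 ≠ 0 := by nlinarith
  have hd : ∀ t, 0 < t → HasDerivAt (fun t => besselJ c j * (W a b t / (b ^ 2 - a ^ 2))
        - besselJ b j * (W a c t / (c ^ 2 - a ^ 2)))
      (besselJ a t / t * (besselJ c j * besselJ b t - besselJ c t * besselJ b j)) t := by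
    intro t ht
    refine ((((W_deriv ha.le hb.le ht).div_const _).const_mul _).sub
      (((W_deriv ha.le hc.le ht).div_const _).const_mul _)).congr_deriv ?_
    field_simp
  have hmono : MonotoneOn (fun t => besselJ c j * (W a b t / (b ^ 2 - a ^ 2))
        - besselJ b j * (W a c t / (c ^ 2 - a ^ 2))) (Icc 0 j) := by
    apply monotoneOn_of_deriv_nonneg (convex_Icc 0 j)
    · have e1 : ContinuousOn (W a b) (Icc 0 j) := (W_cont ha.le hb.le).mono fun t ht => ht.1
      have e2 : ContinuousOn (W a c) (Icc 0 j) := (W_cont ha.le hc.le).mono fun t ht => ht.1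
      fun_prop
    · intro t ht
      rw [interior_Icc] at ht
      exact (hd t ht.1).differentiableAt.differentiableWithinAt
    · intro t ht
      rw [interior_Icc] at ht
      rw [(hd t ht.1).deriv]
      have h3 := ratio_mono hb hbc hpb hpc ht.1 ht.2.le
      have h4 := hpa t ht.1 ht.2.le
      exact mul_nonneg (div_nonneg h4.le ht.1.le) (by linarith)
  have h := hmono (left_mem_Icc.2 hj.le) (right_mem_Icc.2 hj.le) hj.le
  simp only [W_zero ha] at h
  simp only [zero_div, mul_zero, sub_zero] at h
  linarith

/-- The quotient in `Qseq`. -/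
lemma main_mono {N : ℕ} (hN : 2 ≤ N) (hj0 : besselJzero ((N : ℝ) / 2 - 1) ≠ 0) {k : ℕ}
    (hk : 2 ≤ k) : Qseq N k ≤ Qseq N (k + 1) := by
  have hN' : (2 : ℝ) ≤ N := by exact_mod_cast hN
  have hk' : (2 : ℝ) ≤ k := by exact_mod_cast hk
  have hν : 0 ≤ (N : ℝ) / 2 - 1 := by linarith
  obtain ⟨hj, hz, hp⟩ := zero_facts hν hj0
  unfold Qseq
  set j := besselJzero ((N : ℝ) / 2 - 1)
  apply mul_le_mul_of_nonneg_left
  swap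
  · have : 0 ≤ ballVol N := ENNReal.toReal_nonneg
    positivity
  have ea : ((N : ℝ) / 2 - 1) + (0 : ℕ) + 1 = N / 2 := by push_cast; ring
  have eb : ((N : ℝ) / 2 - 1) + (k - 1 : ℕ) + 1 = (k : ℝ) + N / 2 - 1 := by
    rw [Nat.cast_sub (by omega)]; push_cast; ring
  have ec : ((N : ℝ) / 2 - 1) + k + 1 = ((k + 1 : ℕ) : ℝ) + N / 2 - 1 := by push_cast; ring
  have hpa := pos_all hν hp 0
  have hpb := pos_all hν hp (k - 1)
  have hpc := pos_all hν hp k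
  rw [ea] at hpa
  rw [eb] at hpb
  rw [ec] at hpc
  have ha : 0 < (N : ℝ) / 2 := by linarith
  set a := (N : ℝ) / 2 with hadef
  set b := (k : ℝ) + a - 1 with hb
  have hc : ((k + 1 : ℕ) : ℝ) + a - 1 = b + 1 := by push_cast; ring
  rw [hc] at hpc ⊢
  have hab : a < b := by linarith
  have hbc : b < b + 1 := by linarith
  set c := b + 1
  have hN2 : (N : ℝ) ^ 2 / 4 = a ^ 2 := by rw [hadef]; ring
  rw [hN2]
  have hA := hpa j hj le_rfl
  have hB := hpb j hj le_rfl
  have hC := hpc j hj le_rfl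
  have hrec := J_rec hν hj
  rw [hz, sub_zero, show a - 1 + 1 = a by ring, show a - 1 + 2 = a + 1 by ring] at hrec
  have hW : ∀ d, 0 < besselJ d j → d + a - j * besselJ (d + 1) j / besselJ d j
      = W a d j / (besselJ a j * besselJ d j) := by
    intro d hd
    unfold W
    rw [hrec]
    field_simp
    ring
  rw [hW b hB, hW c hC]
  have w1 := W_pos ha hab hpa hpb hj le_rfl
  have w2 := W_pos ha (hab.trans hbc) hpa hpc hj le_rfl
  have hcomp := W_compare ha hab hbc hj hpa hpb hpc
  have hs1 : 0 < b ^ 2 - a ^ 2 := by nlinarith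
  have hs2 : 0 < c ^ 2 - a ^ 2 := by nlinarith
  rw [← mul_div_assoc, ← mul_div_assoc, div_le_div_iff₀ hs2 hs1] at hcomp
  rw [div_div_eq_mul_div, div_div_eq_mul_div, div_le_div_iff₀ w1 w2]
  nlinarith

lemma ballVol_pos (N : ℕ) : 0 < ballVol N :=
  ENNReal.toReal_pos (Metric.measure_ball_pos volume _ one_pos).ne' measure_ball_lt_top.ne

lemma Q_two {N : ℕ} (hN : 2 ≤ N) (hj0 : besselJzero ((N : ℝ) / 2 - 1) ≠ 0) :
    Qseq N 2 = CN N := by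
  have hN' : (2 : ℝ) ≤ N := by exact_mod_cast hN
  have hν : 0 ≤ (N : ℝ) / 2 - 1 := by linarith
  obtain ⟨hj, hz, hp⟩ := zero_facts hν hj0
  have hA := pos_all hν hp 0 _ hj le_rfl
  have hB := pos_all hν hp 1 _ hj le_rfl
  have r1 := J_rec hν hj
  have r2 := J_rec (by linarith : 0 ≤ (N : ℝ) / 2 - 1 + 1) hj
  unfold Qseq CN GN
  have hv := ballVol_pos N
  set j := besselJzero ((N : ℝ) / 2 - 1)
  have hI : 0 ≤ ∫ r in (0 : ℝ)..j, r * besselJ ((N : ℝ) / 2 - 1) r ^ 2 := by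
    apply intervalIntegral.integral_nonneg hj.le
    intro r hr
    have := hr.1
    positivity
  set I := ∫ r in (0 : ℝ)..j, r * besselJ ((N : ℝ) / 2 - 1) r ^ 2
  set P := deriv (besselJ ((N : ℝ) / 2 - 1)) j
  rw [show ((2 : ℕ) : ℝ) + N / 2 - 1 = (N : ℝ) / 2 + 1 by push_cast; ring]
  rw [show (N : ℝ) / 2 - 1 + (0 : ℕ) + 1 = N / 2 by push_cast; ring] at hA
  rw [show (N : ℝ) / 2 - 1 + (1 : ℕ) + 1 = N / 2 + 1 by push_cast; ring] at hB
  rw [hz, show (N : ℝ) / 2 - 1 + 1 = N / 2 by ring,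
    show (N : ℝ) / 2 - 1 + 2 = N / 2 + 1 by ring] at r1
  rw [show (N : ℝ) / 2 - 1 + 1 = N / 2 by ring,
    show (N : ℝ) / 2 + 2 = N / 2 + 1 + 1 by ring] at r2
  have hden : (N : ℝ) / 2 + 1 + N / 2 - j * besselJ (N / 2 + 1 + 1) j / besselJ (N / 2 + 1) j
      = (j ^ 2 - N) / N := by
    have hAB : besselJ ((N : ℝ) / 2) j = j * besselJ (N / 2 + 1) j / N := by
      rw [r1]; field_simp; ring
    rw [r2, hAB]
    have hB' := hB.ne'
    generalize besselJ ((N : ℝ) / 2 + 1) j = B at hB'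
    field_simp
    ring
  rw [hden, div_pow, Real.sq_sqrt (by positivity)]
  have hN0 : (N : ℝ) ≠ 0 := by linarith
  by_cases hP : P = 0
  · simp [hP]
  by_cases hI0 : I = 0
  · simp [hI0]
  by_cases hD : j ^ 2 - N = 0
  · simp [hD]
  field_simp
  ring

end BesselAux

end

/-- **Lemma 2.3.**  For all `N ≥ 2` and integers `k ≥ 2`, `Q_k ≤ Q_{k+1}`; consequently
`inf_{k ≥ 2} Q_k = Q_2 = C_N`. -/
theorem Qseq_monotone_and_inf (N : ℕ) (hN : 2 ≤ N) :
    (∀ k : ℕ, 2 ≤ k → Qseq N k ≤ Qseq N (k + 1)) ∧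
    sInf {q : ℝ | ∃ k : ℕ, 2 ≤ k ∧ q = Qseq N k} = Qseq N 2 ∧
    Qseq N 2 = CN N := by
  have hmono : ∀ k : ℕ, 2 ≤ k → Qseq N k ≤ Qseq N (k + 1) := by
    intro k hk
    by_cases hj : besselJzero ((N : ℝ) / 2 - 1) = 0
    · simp [Qseq, hj]
    · exact BesselAux.main_mono hN hj hk
  refine ⟨hmono, ?_, ?_⟩
  · have hl : IsLeast {q : ℝ | ∃ k : ℕ, 2 ≤ k ∧ q = Qseq N k} (Qseq N 2) := by
      refine ⟨⟨2, le_rfl, rfl⟩, ?_⟩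
      rintro q ⟨k, hk, rfl⟩
      induction k, hk using Nat.le_induction with
      | base => exact le_rfl
      | succ k hk ih => exact ih.trans (hmono k hk)
    exact hl.csInf_eq
  · by_cases hj : besselJzero ((N : ℝ) / 2 - 1) = 0
    · simp [Qseq, CN, hj]
    · exact BesselAux.Q_two hN hj
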